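/- arXiv:2401.05640 — 2 statements merged into one kernel-verified Lean document; each statement's English description precedes it below -/
import Mathlib

section
/- Let G be a distance-regular graph of diameter 3 with intersection array {k, b₁, b₂; 1, c₂, c₃}, let q ≠ 0 be a real number, and let v be a nonzero real vector with Av = θv. Then 𝔻_q v = μ·v, where μ = (1/(c₂c₃q²))·( ((q²+q+1)a₂ − (q²+q)c₃)k + (q²c₂c₃ − (q²+q)a₁c₃ + (q²+q+1)(a₁a₂ − b₁c₂ − k))θ + ((q²+q)c₃ − (q²+q+1)(a₁+a₂))θ² + (q²+q+1)θ³ ). -/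
open Matrix

variable {V : Type*} [Fintype V] [DecidableEq V]

/-- The distance-`i` matrix of a graph: the `(x,y)` entry is 1 if `dist x y = i`, else 0. -/
noncomputable def distM (G : SimpleGraph V) (i : ℕ) : Matrix V V ℝ :=
  Matrix.of fun x y => if G.dist x y = i then (1 : ℝ) else 0

/-- The `q`-distance matrix `𝔻_q = ∑_{i=1}^D (1 + 1/q + ⋯ + 1/q^{i-1}) • A_i`. -/
noncomputable def qDist (G : SimpleGraph V) (D : ℕ) (q : ℝ) : Matrix V V ℝ :=
  ∑ i ∈ Finset.Icc 1 D, (∑ j ∈ Finset.range i, (1 / q) ^ j) • distM G i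

/-- `G` is distance-regular with diameter `D` and intersection numbers `b i`, `c i`
(with `c 1 = 1`): for any vertices `x, y` at distance `i ≤ D`, the number of neighbors
of `y` at distance `i - 1` from `x` is `c i` and the number of neighbors of `y` at
distance `i + 1` from `x` is `b i`. -/
def IsDRG (G : SimpleGraph V) (D : ℕ) (b c : ℕ → ℕ) : Prop :=
  G.Connected ∧
  (∀ x y : V, G.dist x y ≤ D) ∧
  (∃ x y : V, G.dist x y = D) ∧
  c 1 = 1 ∧
  ∀ i ≤ D, ∀ x y : V, G.dist x y = i →
    ({z : V | G.Adj y z ∧ G.dist x z = i - 1} : Set V).ncard = c i ∧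
    ({z : V | G.Adj y z ∧ G.dist x z = i + 1} : Set V).ncard = b i

/-- `a i = k - b i - c i` as a real number, where `k = b 0`. -/
noncomputable def aInt (b c : ℕ → ℕ) (i : ℕ) : ℝ := (b 0 : ℝ) - (b i : ℝ) - (c i : ℝ)

lemma cnt_eq (G : SimpleGraph V) (x y : V) (j : ℕ) :
    (distM G j * distM G 1) x y = (({z : V | G.Adj y z ∧ G.dist x z = j} : Set V).ncard : ℝ) := by
  classical
  rw [Set.ncard_eq_toFinset_card', Matrix.mul_apply]
  simp only [distM, Matrix.of_apply, SimpleGraph.dist_eq_one_iff_adj]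
  rw [Finset.card_eq_sum_ones, Nat.cast_sum]
  simp only [Set.toFinset_setOf, Finset.sum_filter]
  refine Finset.sum_congr rfl fun z _ => ?_
  by_cases h1 : G.Adj y z <;> by_cases h2 : G.dist x z = j <;> simp [h1, h2, G.adj_comm z y]

lemma near (G : SimpleGraph V) (hc : G.Connected) {x y z : V} (h : G.Adj y z) :
    G.dist x z ≤ G.dist x y + 1 ∧ G.dist x y ≤ G.dist x z + 1 := by
  have h1 := SimpleGraph.dist_eq_one_iff_adj.2 h
  have h2 := SimpleGraph.dist_eq_one_iff_adj.2 h.symm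
  have := hc.dist_triangle (u := x) (v := y) (w := z)
  have := hc.dist_triangle (u := x) (v := z) (w := y)
  omega

lemma far (G : SimpleGraph V) (hc : G.Connected) {x y : V} {j : ℕ}
    (h : G.dist x y + 1 < j ∨ j + 1 < G.dist x y) :
    ({z : V | G.Adj y z ∧ G.dist x z = j} : Set V).ncard = 0 := by
  rw [Set.ncard_eq_zero]
  ext z
  simp only [Set.mem_setOf_eq, Set.mem_empty_iff_false, iff_false, not_and]
  intro h1 h2
  have := near G hc (x := x) h1
  omega

lemma mid (G : SimpleGraph V) (b c : ℕ → ℕ) (hG : IsDRG G 3 b c) {x y : V} {i : ℕ} (hi : 1 ≤ i)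
    (h : G.dist x y = i) :
    (({z : V | G.Adj y z ∧ G.dist x z = i} : Set V).ncard : ℝ) = aInt b c i := by
  obtain ⟨hc, hD, -, -, hr⟩ := hG
  have hi3 : i ≤ 3 := h ▸ hD x y
  obtain ⟨h1, h2⟩ := hr i hi3 x y h
  have h0 := (hr 0 (by omega) y y SimpleGraph.dist_self).2
  have e : {z : V | G.Adj y z ∧ G.dist y z = 0 + 1} =
      ({z : V | G.Adj y z ∧ G.dist x z = i - 1} ∪ {z : V | G.Adj y z ∧ G.dist x z = i + 1}) ∪
        {z : V | G.Adj y z ∧ G.dist x z = i} := by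
    ext z
    simp only [Set.mem_setOf_eq, Set.mem_union, zero_add, SimpleGraph.dist_eq_one_iff_adj]
    constructor
    · rintro ⟨ha, -⟩
      have := near G hc (x := x) ha
      have : G.dist x z = i - 1 ∨ G.dist x z = i + 1 ∨ G.dist x z = i := by omega
      tauto
    · tauto
  rw [e, Set.ncard_union_eq, Set.ncard_union_eq, h1, h2] at h0
  · rw [aInt, ← h0]; push_cast; ring
  · rw [Set.disjoint_left]; rintro z ⟨_, h⟩ ⟨_, h'⟩; omega
  · rw [Set.disjoint_left]; rintro z (⟨_, h⟩ | ⟨_, h⟩) ⟨_, h'⟩ <;> omega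

lemma mulOne (G : SimpleGraph V) (b c : ℕ → ℕ) (hG : IsDRG G 3 b c) :
    distM G 1 * distM G 1 = (b 0 : ℝ) • 1 + aInt b c 1 • distM G 1 + (c 2 : ℝ) • distM G 2 := by
  have hm := @mid V _ _ G b c hG
  obtain ⟨hc, hD, -, -, hr⟩ := hG
  ext x y
  rw [cnt_eq]
  have h3 := hD x y
  have hxy : x = y ↔ G.dist x y = 0 := (hc.dist_eq_zero_iff).symm
  simp only [Matrix.add_apply, Matrix.smul_apply, Matrix.one_apply, hxy, distM, Matrix.of_apply]
  have h4 : G.dist x y = 0 ∨ G.dist x y = 1 ∨ G.dist x y = 2 ∨ G.dist x y = 3 := by omega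
  rcases h4 with h | h | h | h
  · have := (hr 0 (by omega) x y h).2
    simp only [zero_add] at this
    rw [this]; simp [h]
  · rw [hm le_rfl h]; simp [h]
  · have := (hr 2 (by omega) x y h).1
    simp only [Nat.add_one_sub_one] at this
    rw [this]; simp [h]
  · rw [far G hc (by omega)]; simp [h]

lemma mulTwo (G : SimpleGraph V) (b c : ℕ → ℕ) (hG : IsDRG G 3 b c) :
    distM G 2 * distM G 1 = (b 1 : ℝ) • distM G 1 + aInt b c 2 • distM G 2
      + (c 3 : ℝ) • distM G 3 := by
  have hm := @mid V _ _ G b c hG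
  obtain ⟨hc, hD, -, -, hr⟩ := hG
  ext x y
  rw [cnt_eq]
  have h3 := hD x y
  simp only [Matrix.add_apply, Matrix.smul_apply, distM, Matrix.of_apply]
  have h4 : G.dist x y = 0 ∨ G.dist x y = 1 ∨ G.dist x y = 2 ∨ G.dist x y = 3 := by omega
  rcases h4 with h | h | h | h
  · rw [far G hc (by omega)]; simp [h]
  · have := (hr 1 (by omega) x y h).2
    simp only [Nat.reduceAdd] at this
    rw [this]; simp [h]
  · rw [hm (by omega) h]; simp [h]
  · have := (hr 3 (by omega) x y h).1
    simp only [Nat.add_one_sub_one] at this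
    rw [this]; simp [h]

lemma pred_exists (G : SimpleGraph V) (hc : G.Connected) {x y : V} {i : ℕ}
    (h : G.dist x y = i + 1) : ∃ z, G.Adj y z ∧ G.dist x z = i := by
  obtain ⟨p, hp⟩ := hc.exists_walk_length_eq_dist y x
  rw [SimpleGraph.dist_comm, h] at hp
  cases p with
  | nil => simp at hp
  | cons ha p =>
    rename_i z
    refine ⟨z, ha, ?_⟩
    have h1 := SimpleGraph.dist_le p
    have h2 := near G hc (x := x) ha
    rw [SimpleGraph.dist_comm] at h1
    simp only [SimpleGraph.Walk.length_cons] at hp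
    omega

lemma c_ne (G : SimpleGraph V) (b c : ℕ → ℕ) (hG : IsDRG G 3 b c) : c 2 ≠ 0 ∧ c 3 ≠ 0 := by
  obtain ⟨hc, hD, ⟨x, y, h⟩, -, hr⟩ := hG
  obtain ⟨z, hz, hxz⟩ := pred_exists G hc h
  obtain ⟨w, hw, hxw⟩ := pred_exists G hc hxz
  constructor
  · rw [← (hr 2 (by omega) x z hxz).1]
    exact Set.ncard_ne_zero_of_mem (a := w) ⟨hw, hxw⟩
  · rw [← (hr 3 (by omega) x y h).1]
    exact Set.ncard_ne_zero_of_mem (a := z) ⟨hz, hxz⟩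

/-- Proposition 3.1: for a distance-regular graph of diameter 3 with
intersection array `{k, b₁, b₂; 1, c₂, c₃}`, `q ≠ 0`, and a nonzero eigenvector `v` of the
adjacency matrix with eigenvalue `θ`, `v` is an eigenvector of `𝔻_q` with eigenvalue
`R_q(θ)` as given by the cubic polynomial in `θ`. -/
theorem stmt1 (G : SimpleGraph V) (b c : ℕ → ℕ) (hG : IsDRG G 3 b c)
    (q : ℝ) (hq : q ≠ 0) (θ : ℝ) (v : V → ℝ) (hv : v ≠ 0)
    (hAv : (distM G 1).mulVec v = θ • v) :
    (qDist G 3 q).mulVec v =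
      ((1 / ((c 2 : ℝ) * (c 3 : ℝ) * q ^ 2)) *
        (((q ^ 2 + q + 1) * aInt b c 2 - (q ^ 2 + q) * (c 3 : ℝ)) * (b 0 : ℝ)
          + (q ^ 2 * (c 2 : ℝ) * (c 3 : ℝ) - (q ^ 2 + q) * aInt b c 1 * (c 3 : ℝ)
              + (q ^ 2 + q + 1) *
                (aInt b c 1 * aInt b c 2 - (b 1 : ℝ) * (c 2 : ℝ) - (b 0 : ℝ))) * θ
          + ((q ^ 2 + q) * (c 3 : ℝ) - (q ^ 2 + q + 1) * (aInt b c 1 + aInt b c 2)) * θ ^ 2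
          + (q ^ 2 + q + 1) * θ ^ 3)) • v := by
  obtain ⟨h2, h3⟩ := c_ne G b c hG
  have h2' : (c 2 : ℝ) ≠ 0 := by exact_mod_cast h2
  have h3' : (c 3 : ℝ) ≠ 0 := by exact_mod_cast h3
  have e1 := congrArg (fun M => M.mulVec v) (mulOne G b c hG)
  have e2 := congrArg (fun M => M.mulVec v) (mulTwo G b c hG)
  simp only [← Matrix.mulVec_mulVec, hAv, Matrix.add_mulVec, Matrix.smul_mulVec,
    Matrix.mulVec_smul, Matrix.one_mulVec] at e1 e2
  have hI : Finset.Icc 1 3 = {1, 2, 3} := by decide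
  ext x
  have f1 := congrFun e1 x
  have f2 := congrFun e2 x
  simp only [qDist, hI, Finset.sum_insert, Finset.mem_insert, Finset.mem_singleton,
    Finset.sum_singleton, Finset.sum_range_succ, Finset.sum_range_zero, Matrix.add_mulVec,
    Matrix.smul_mulVec, hAv, Pi.add_apply, Pi.smul_apply, smul_eq_mul, OfNat.one_ne_ofNat,
    Nat.reduceEqDiff, or_self, not_false_eq_true] at f1 f2 ⊢
  generalize (distM G 2 *ᵥ v) x = s at *
  generalize (distM G 3 *ᵥ v) x = t at *
  have hs : s = (θ * (θ * v x) - b 0 * v x - aInt b c 1 * (θ * v x)) / c 2 := by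
    rw [eq_div_iff h2']; linarith
  have ht : t = (θ * s - b 1 * (θ * v x) - aInt b c 2 * s) / c 3 := by
    rw [eq_div_iff h3']; linarith
  rw [ht, hs]
  field_simp
  ring
end

section
/- Let G be a distance-regular graph of diameter 3 with intersection array {k, b₁, b₂; 1, c₂, c₃}, let q ≠ 0 be a real number, and let v be a nonzero real vector orthogonal to the all-ones vector with Av = θv. Then 𝔻_q v = R_q(θ)·v, where R_q(θ) = −(1/(c₂q²))·((q²+q+1)c₂ − k + ((q+1)c₂ − a₁)θ + θ²). -/
open Matrix

variable {V : Type*} [Fintype V] [DecidableEq V]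

theorem aux_card (S : Set V) [DecidablePred (· ∈ S)] :
    (S.ncard : ℝ) = ∑ z : V, if z ∈ S then (1:ℝ) else 0 := by
  rw [Set.ncard_eq_toFinset_card', Finset.sum_boole]
  congr 2
  ext z; simp

theorem aux_pred (G : SimpleGraph V) (hc : G.Connected) (x y : V) (n : ℕ)
    (h : G.dist x y = n + 1) : ∃ z, G.Adj y z ∧ G.dist x z = n := by
  obtain ⟨p, hp⟩ := hc.exists_walk_length_eq_dist y x
  rw [SimpleGraph.dist_comm, h] at hp
  cases p with
  | nil => simp at hp
  | cons hadj p' =>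
    rename_i z
    refine ⟨z, hadj, ?_⟩
    simp at hp
    have h1 : G.dist z x ≤ p'.length := SimpleGraph.dist_le p'
    have h2 := hc.dist_triangle (u := x) (v := z) (w := y)
    have h3 : G.dist z y = 1 := SimpleGraph.dist_eq_one_iff_adj.2 hadj.symm
    rw [SimpleGraph.dist_comm] at h1
    omega

theorem aux_sq (G : SimpleGraph V) (b c : ℕ → ℕ) (hG : IsDRG G 3 b c) :
    distM G 1 * distM G 1 = (b 0 : ℝ) • (1 : Matrix V V ℝ) + aInt b c 1 • distM G 1
      + (c 2 : ℝ) • distM G 2 := by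
  classical
  obtain ⟨hc, hD, -, hc1, h⟩ := hG
  have hdeg : ∀ y : V, ∑ z : V, (if G.dist y z = 1 then (1:ℝ) else 0) = b 0 := by
    intro y
    have := (h 0 (by norm_num) y y (by simp)).2
    rw [← this, aux_card]
    apply Finset.sum_congr rfl
    intro z _
    simp [SimpleGraph.dist_eq_one_iff_adj]
  ext x y
  simp only [Matrix.mul_apply, distM, Matrix.of_apply, Matrix.add_apply, Matrix.smul_apply,
    smul_eq_mul, Matrix.one_apply]
  have tri := fun z => hc.dist_triangle (u := x) (v := z) (w := y)
  have tri2 := fun z => hc.dist_triangle (u := x) (v := y) (w := z)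
  have hcomm : ∀ z, G.dist z y = G.dist y z := fun z => SimpleGraph.dist_comm
  by_cases h0 : x = y
  · subst h0
    have key : ∑ z, (if G.dist x z = 1 then (1:ℝ) else 0) * (if G.dist z x = 1 then 1 else 0) = b 0 := by
      rw [← hdeg x]
      apply Finset.sum_congr rfl
      intro z _
      rw [hcomm z]
      split_ifs <;> norm_num
    rw [key]
    simp
  have hxy0 : G.dist x y ≠ 0 := fun e => h0 (hc.dist_eq_zero_iff.1 e)
  rw [if_neg h0]
  have := hD x y
  obtain h1 | h1 | h1 : G.dist x y = 1 ∨ G.dist x y = 2 ∨ G.dist x y = 3 := by omega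
  · obtain ⟨e1, e2⟩ := h 1 (by norm_num) x y h1
    have e1' := congrArg (Nat.cast : ℕ → ℝ) e1
    have e2' := congrArg (Nat.cast : ℕ → ℝ) e2
    rw [aux_card] at e1' e2'
    have key : ∑ z, (if G.dist x z = 1 then (1:ℝ) else 0) * (if G.dist z y = 1 then 1 else 0) = aInt b c 1 := by
      rw [aInt, ← e1', ← e2', ← hdeg y]
      rw [← Finset.sum_sub_distrib, ← Finset.sum_sub_distrib]
      apply Finset.sum_congr rfl
      intro z _
      have t1 := tri z
      have t2 := tri2 z
      rw [hcomm z]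
      simp only [Set.mem_setOf_eq, ← SimpleGraph.dist_eq_one_iff_adj]
      by_cases hz : G.dist y z = 1
      · have : G.dist x z = 0 ∨ G.dist x z = 1 ∨ G.dist x z = 2 := by omega
        rcases this with e | e | e <;> simp only [hz, e] <;> norm_num
      · simp only [hz]; norm_num
    rw [key, h1]
    norm_num
  · obtain ⟨e1, -⟩ := h 2 (by norm_num) x y h1
    have key : ∑ z, (if G.dist x z = 1 then (1:ℝ) else 0) * (if G.dist z y = 1 then 1 else 0) = c 2 := by
      rw [← e1, aux_card]
      apply Finset.sum_congr rfl
      intro z _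
      rw [hcomm z]
      simp only [Set.mem_setOf_eq, ← SimpleGraph.dist_eq_one_iff_adj]
      by_cases hz : G.dist y z = 1 <;> simp only [hz] <;> norm_num
    rw [key, h1]
    norm_num
  · have key : ∑ z, (if G.dist x z = 1 then (1:ℝ) else 0) * (if G.dist z y = 1 then 1 else 0) = 0 := by
      apply Finset.sum_eq_zero
      intro z _
      have t1 := tri z
      split_ifs <;> first | omega | norm_num
    rw [key, h1]
    norm_num

theorem stmt3 (G : SimpleGraph V) (b c : ℕ → ℕ) (hG : IsDRG G 3 b c)
    (q : ℝ) (hq : q ≠ 0) (θ : ℝ) (v : V → ℝ) (hv : v ≠ 0)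
    (horth : ∑ x : V, v x = 0)
    (hAv : (distM G 1).mulVec v = θ • v) :
    (qDist G 3 q).mulVec v =
      (-(1 / ((c 2 : ℝ) * q ^ 2)) *
        ((q ^ 2 + q + 1) * (c 2 : ℝ) - (b 0 : ℝ)
          + ((q + 1) * (c 2 : ℝ) - aInt b c 1) * θ + θ ^ 2)) • v := by
  have hsq := aux_sq G b c hG
  obtain ⟨hc, hD, ⟨x, y, hxy⟩, hc1, h⟩ := hG
  have hc2 : (c 2 : ℝ) ≠ 0 := by
    obtain ⟨z, -, hz⟩ := aux_pred G hc x y 2 hxy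
    obtain ⟨w, hw1, hw2⟩ := aux_pred G hc x z 1 hz
    have := (h 2 (by norm_num) x z hz).1
    rw [← this]
    have hne : ({w : V | G.Adj z w ∧ G.dist x w = 2 - 1} : Set V).Nonempty := ⟨w, hw1, hw2⟩
    exact_mod_cast (Set.ncard_pos (Set.toFinite _)).2 hne |>.ne'
  have hJ : (1 : Matrix V V ℝ) + distM G 1 + distM G 2 + distM G 3 = Matrix.of fun _ _ => 1 := by
    ext x y
    simp only [distM, Matrix.of_apply, Matrix.add_apply, Matrix.one_apply,
      ← hc.dist_eq_zero_iff]
    have := hD x y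
    generalize G.dist x y = d at *
    interval_cases d <;> norm_num
  have e2 := congrArg (fun M => M.mulVec v) hsq
  have e3 := congrArg (fun M => M.mulVec v) hJ
  simp only [← Matrix.mulVec_mulVec, Matrix.add_mulVec, Matrix.smul_mulVec, hAv,
    Matrix.mulVec_smul, Matrix.one_mulVec] at e2 e3
  have hQ : qDist G 3 q = distM G 1 + (1 + 1 / q) • distM G 2
      + (1 + 1 / q + (1 / q) ^ 2) • distM G 3 := by
    simp [qDist, Finset.sum_Icc_succ_top, Finset.sum_range_succ]
  rw [hQ]
  simp only [Matrix.add_mulVec, Matrix.smul_mulVec, hAv]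
  ext x
  have f2 := congrFun e2 x
  have f3 := congrFun e3 x
  simp only [Pi.add_apply, Pi.smul_apply, smul_eq_mul] at f2 f3 ⊢
  have hz : (Matrix.of (fun _ _ => (1:ℝ)) *ᵥ v : V → ℝ) x = 0 := by
    simp [Matrix.mulVec, dotProduct, horth]
  rw [hz] at f3
  have g3 : (distM G 3 *ᵥ v) x = -(v x + θ * v x + (distM G 2 *ᵥ v) x) := by linarith
  have g2 : (distM G 2 *ᵥ v) x = (θ * (θ * v x) - b 0 * v x - aInt b c 1 * (θ * v x)) / c 2 := by
    field_simp
    linarith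
  rw [g3, g2]
  field_simp
  ring
end
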